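/- arXiv:1707.00052 — 2 statements merged into one kernel-verified Lean document; each statement's English description precedes it below -/
import Mathlib

section
/- Let q ≥ 2, ℓ ≥ 1, x ∈ Z_q^n (indexed x_1, …, x_n), and let i ≥ 0 and 1 ≤ j < ℓ satisfy i + j ≤ n − ℓ. Then π_{i,ℓ}(x) = π_{i+j,ℓ}(x) if and only if all of the following hold: x_{i+ℓ+1+m} = x_{i+ℓ−m} for all m ∈ {0, …, j−1}; x_{i+ℓ+2j−m} = x_{i+ℓ−m} for all m ∈ {j, …, ℓ−1}; and x_{i+ℓ+2j−m} = x_{i+1+m} for all m ∈ {ℓ, …, ℓ+j−1}. -/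
/-!
Write `y = π_{i,ℓ}(x)` and `y' = π_{i+j,ℓ}(x)`. Before position `i + ℓ` both words copy `x`, and
from position `i + j + 2 * ℓ` on both copy `x` shifted by `ℓ`, so `y = y'` is decided on the window
of positions `i + ℓ + m` with `m < ℓ + j`. Each of the three conditions compares the two words
on one part of this window:

* `m < j`: `y` is inside its reversed block, while `y'` still copies `x`;
* `j ≤ m < ℓ`: both are inside their reversed blocks;
* `ℓ ≤ m < ℓ + j`: `y` has returned to copying `x`, while `y'` is inside its reversed block.
-/

namespace DupPaper

variable {α : Type*}

/-- `y` is obtained from `x` by one tandem duplication of length `ℓ`. -/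
def TDup (ℓ : ℕ) (x y : List α) : Prop :=
  ∃ u v w : List α, v.length = ℓ ∧ x = u ++ v ++ w ∧ y = u ++ v ++ v ++ w

/-- `y` is obtained from `x` by one tandem deletion of length `ℓ`. -/
def TDel (ℓ : ℕ) (x y : List α) : Prop :=
  ∃ u v w : List α, v.length = ℓ ∧ x = u ++ v ++ v ++ w ∧ y = u ++ v ++ w

/-- `y` is obtained from `x` by one palindromic duplication of length `ℓ`. -/
def PDup (ℓ : ℕ) (x y : List α) : Prop :=
  ∃ u v w : List α, v.length = ℓ ∧ x = u ++ v ++ w ∧ y = u ++ v ++ v.reverse ++ w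

/-- `y` is obtained from `x` by one palindromic deletion of length `ℓ`. -/
def PDel (ℓ : ℕ) (x y : List α) : Prop :=
  ∃ u v w : List α, v.length = ℓ ∧ x = u ++ v ++ v.reverse ++ w ∧ y = u ++ v ++ w

/-- `y` is reached from `x` by exactly `k` steps of the relation `rel`. -/
def reachK (rel : List α → List α → Prop) : ℕ → List α → List α → Prop
  | 0, x, y => x = y
  | k + 1, x, y => ∃ z, rel x z ∧ reachK rel k z y

/-- The sphere of all words reachable from `x` by at most `t` operations of type `rel`
(in particular it contains `x` itself). -/
def sphere (rel : List α → List α → Prop) (t : ℕ) (x : List α) : Set (List α) :=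
  {y | ∃ k ≤ t, reachK rel k x y}

/-- A code `C` is `t`-error correcting for the error type `rel` if distinct codewords have
disjoint spheres. -/
def Correcting (rel : List α → List α → Prop) (t : ℕ) (C : Set (List α)) : Prop :=
  ∀ c₁ ∈ C, ∀ c₂ ∈ C, (sphere rel t c₁ ∩ sphere rel t c₂).Nonempty → c₁ = c₂

/-- The list of maximal runs (maximal blocks of identical consecutive symbols) of a word. -/
def runs [DecidableEq α] : List α → List (List α)
  | [] => []
  | a :: rest =>
    match runs rest with
    | [] => [[a]]
    | r :: rs => if r.head? = some a then (a :: r) :: rs else [a] :: r :: rs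

/-- `r(x)`: the number of runs of `x`. -/
def numRuns [DecidableEq α] (x : List α) : ℕ := (runs x).length

/-- `r_i(x)`: the number of runs of `x` of length exactly `i`. -/
def numRunsEq [DecidableEq α] (x : List α) (i : ℕ) : ℕ :=
  ((runs x).filter (fun r => r.length = i)).length

/-- `r_{≥ i}(x)`: the number of runs of `x` of length at least `i`. -/
def numRunsGe [DecidableEq α] (x : List α) (i : ℕ) : ℕ :=
  ((runs x).filter (fun r => i ≤ r.length)).length

/-- `r_{I,2}(x)`: the number of runs of length exactly `2` located in the interior of `x`,
i.e. runs that are neither the first nor the last run of `x`. -/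
def numInteriorRuns2 [DecidableEq α] (x : List α) : ℕ :=
  ((((runs x).drop 1).dropLast).filter (fun r => r.length = 2)).length

/-- The second component `v` of the `ℓ`-step derivative `φ_ℓ(x) = (u, v)`:
`v = (x_{ℓ+1}, …, x_n) − (x_1, …, x_{n−ℓ})` componentwise in `Z_q`. -/
def derivV (q ℓ : ℕ) (x : List (ZMod q)) : List (ZMod q) :=
  List.zipWith (· - ·) (x.drop ℓ) x

/-- Hamming weight: the number of nonzero entries. -/
def wtH {q : ℕ} (v : List (ZMod q)) : ℕ := (v.filter (fun a => a ≠ 0)).length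

/-- The lengths `(m_0, m_1, …, m_p)` of the (possibly empty) maximal zero runs of `v`,
where `v = (0^{m_0}, w_1, 0^{m_1}, w_2, …, w_p, 0^{m_p})` with all `w_i ≠ 0`. -/
def zeroRunLengths {q : ℕ} : List (ZMod q) → List ℕ
  | [] => [0]
  | a :: rest =>
    let t := zeroRunLengths rest
    if a = 0 then
      match t with
      | [] => [1]
      | m :: ms => (m + 1) :: ms
    else 0 :: t

/-- The `ℓ`-zero signature `σ_ℓ(v) = (⌊m_0/ℓ⌋, …, ⌊m_p/ℓ⌋)` of `v = derivV q ℓ x`. -/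
def sig (q ℓ : ℕ) (x : List (ZMod q)) : List ℕ :=
  (zeroRunLengths (derivV q ℓ x)).map (· / ℓ)

/-- The trunk `μ_ℓ(v)`: every maximal zero run of length `m` is shortened to length
`m mod ℓ`. -/
def trunk (q ℓ : ℕ) (v : List (ZMod q)) : List (ZMod q) :=
  ((runs v).map (fun r =>
    if r.head? = some (0 : ZMod q) then List.replicate (r.length % ℓ) (0 : ZMod q) else r)).flatten

/-- The root `ρ_ℓ(x) = (u, μ_ℓ(v))` where `φ_ℓ(x) = (u, v)` is the `ℓ`-step derivative. -/
def root (q ℓ : ℕ) (x : List (ZMod q)) : List (ZMod q) × List (ZMod q) :=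
  (x.take ℓ, trunk q ℓ (derivV q ℓ x))

/-- `ℓ1`-distance of two lists of naturals. -/
def l1diff (a b : List ℕ) : ℕ := (List.zipWith (fun s t => max s t - min s t) a b).sum

/-- The tandem duplication distance `d_{τ,ℓ}`. -/
def tdDist (q ℓ : ℕ) (x₁ x₂ : List (ZMod q)) : ℕ∞ :=
  if root q ℓ x₁ = root q ℓ x₂ then (l1diff (sig q ℓ x₁) (sig q ℓ x₂) : ℕ∞) else ⊤

/-- The palindromic duplication `π_{i,ℓ}(x) = (u v v^R w)` at position `i`,
where `x = (u v w)`, `|u| = i`, `|v| = ℓ`. -/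
def pdupAt (i ℓ : ℕ) (x : List α) : List α :=
  x.take (i + ℓ) ++ ((x.drop i).take ℓ).reverse ++ x.drop (i + ℓ)

/-- The result `(u v w)` of the palindromic deletion `π^δ_{i,ℓ}` applied to
`x = (u v v^R w)` with `|u| = i`, `|v| = ℓ`. -/
def pdelAt (i ℓ : ℕ) (x : List α) : List α :=
  x.take (i + ℓ) ++ x.drop (i + 2 * ℓ)

/-- The palindromic deletion `π^δ_{i,ℓ}` is defined at position `i` of `x`, i.e. `x` has the
form `(u v v^R w)` with `|u| = i` and `|v| = ℓ`. -/
def PDelDefinedAt (q ℓ i : ℕ) (x : List (ZMod q)) : Prop :=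
  ∃ u v w : List (ZMod q), u.length = i ∧ v.length = ℓ ∧ x = u ++ v ++ v.reverse ++ w

/-- `A(n', ℓ', ω)`: the number of words in `Z_q^{n'}` whose maximal zero runs all have length
at most `ℓ'` and whose Hamming weight is `ω`. -/
noncomputable def Acount (q n' ℓ' ω : ℕ) : ℕ :=
  {x : Fin n' → ZMod q | wtH (List.ofFn x) = ω ∧
    ∀ r ∈ runs (List.ofFn x), r.head? = some (0 : ZMod q) → r.length ≤ ℓ'}.ncard

/-- Integer binomial coefficient with the conventions `C(a,b) = 0` for `a ≥ 0 > b` or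
`0 ≤ a < b`, `C(-1,-1) = 1`, and `C(a,-1) = 0` for `a ≥ 0`. -/
def ichoose (a b : ℤ) : ℕ :=
  if a = -1 ∧ b = -1 then 1
  else if 0 ≤ a ∧ 0 ≤ b then Nat.choose a.toNat b.toNat
  else 0

/-- `r^{(0)}(A^π_ℓ(x))`: the number of maximal blocks of consecutive all-zero columns of the
matrix `A^π_ℓ(x) ∈ Z_q^{ℓ × (n−2ℓ+1)}` whose entry in row `s` and column `c`
(`1 ≤ s ≤ ℓ`, `1 ≤ c ≤ n−2ℓ+1`) is `x_{2ℓ+c−s} − x_{c+s−1}`. -/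
def zeroColBlocks (q ℓ n : ℕ) (x : List (ZMod q)) : ℕ :=
  ((runs ((List.range (n - 2 * ℓ + 1)).map (fun c =>
      (List.range ℓ).all (fun s =>
        x.getD (2 * ℓ + c - s - 1) (0 : ZMod q) = x.getD (c + s) (0 : ZMod q))))).filter
    (fun r => r.head? = some true)).length

theorem forall_lt_iff_of_le_of_le {P : ℕ → Prop} {a b c : ℕ} (hab : a ≤ b) (hbc : b ≤ c) :
    (∀ m < c, P m) ↔
      (∀ m < a, P m) ∧ (∀ m, a ≤ m → m < b → P m) ∧ (∀ m, b ≤ m → m < c → P m) := by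
  grind

theorem getD_eq_getD_iff_getElem? {x : List α} {a b : ℕ} (d : α)
    (ha : a < x.length) (hb : b < x.length) :
    x.getD a d = x.getD b d ↔ x[a]? = x[b]? := by
  simp [ha, hb]

section Letters

variable {i ℓ p : ℕ} {x : List α}

theorem getElem?_pdupAt_of_lt (h : i + ℓ ≤ x.length) (hp : p < i + ℓ) :
    (pdupAt i ℓ x)[p]? = x[p]? := by
  have hprefix : (x.take (i + ℓ)).length = i + ℓ := List.length_take_of_le h
  rw [pdupAt, List.append_assoc, List.getElem?_append_left (by omega),
    List.getElem?_take_of_lt hp]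

-- `v^R` mirrors `v` in the boundary between them: the mirror image of `p` is `2 * (i + ℓ) - p - 1`.
theorem getElem?_pdupAt_of_le_of_lt (h : i + ℓ ≤ x.length) (hp : i + ℓ ≤ p)
    (hp' : p < i + 2 * ℓ) : (pdupAt i ℓ x)[p]? = x[2 * (i + ℓ) - p - 1]? := by
  have hprefix : (x.take (i + ℓ)).length = i + ℓ := List.length_take_of_le h
  have hblock : ((x.drop i).take ℓ).length = ℓ :=
    List.length_take_of_le (by rw [List.length_drop]; omega)
  rw [pdupAt, List.append_assoc, List.getElem?_append_right (by omega),
    List.getElem?_append_left (by rw [List.length_reverse]; omega),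
    List.getElem?_reverse (by omega), List.getElem?_take_of_lt (by omega), List.getElem?_drop]
  congr 1
  omega

theorem getElem?_pdupAt_of_le (h : i + ℓ ≤ x.length) (hp : i + 2 * ℓ ≤ p) :
    (pdupAt i ℓ x)[p]? = x[p - ℓ]? := by
  have hprefix : (x.take (i + ℓ) ++ ((x.drop i).take ℓ).reverse).length = i + 2 * ℓ := by
    simp only [List.length_append, List.length_reverse, List.length_take, List.length_drop]
    omega
  rw [pdupAt, List.getElem?_append_right (by omega), List.getElem?_drop]
  congr 1
  omega

end Letters

section Comparison

variable {i j ℓ : ℕ} {x : List α}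

theorem pdupAt_eq_pdupAt_add_iff_getElem? (h : i + j + ℓ ≤ x.length) :
    pdupAt i ℓ x = pdupAt (i + j) ℓ x ↔
      ∀ m < ℓ + j, (pdupAt i ℓ x)[i + ℓ + m]? = (pdupAt (i + j) ℓ x)[i + ℓ + m]? := by
  refine ⟨fun heq m _ => by rw [heq], fun hwindow => List.ext_getElem? fun p => ?_⟩
  have hi : i + ℓ ≤ x.length := by omega
  rcases lt_or_ge p (i + ℓ) with hbefore | hp
  · rw [getElem?_pdupAt_of_lt hi hbefore, getElem?_pdupAt_of_lt h (by omega)]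
  rcases lt_or_ge p (i + j + 2 * ℓ) with hinside | hafter
  · obtain ⟨m, rfl⟩ := Nat.exists_eq_add_of_le hp
    exact hwindow m (by omega)
  · rw [getElem?_pdupAt_of_le hi (by omega), getElem?_pdupAt_of_le h hafter]

theorem stmt17_general (d : α) (hj : j ≤ ℓ) (h : i + j + ℓ ≤ x.length) :
    pdupAt i ℓ x = pdupAt (i + j) ℓ x ↔
      ((∀ m < j, x.getD (i + ℓ + m) d = x.getD (i + ℓ - m - 1) d) ∧
       (∀ m, j ≤ m → m < ℓ →
          x.getD (i + ℓ + 2 * j - m - 1) d = x.getD (i + ℓ - m - 1) d) ∧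
       (∀ m, ℓ ≤ m → m < ℓ + j →
          x.getD (i + ℓ + 2 * j - m - 1) d = x.getD (i + m) d)) := by
  have hi : i + ℓ ≤ x.length := by omega
  have reflect_left (m : ℕ) : 2 * (i + ℓ) - (i + ℓ + m) - 1 = i + ℓ - m - 1 := by omega
  have reflect_right (m : ℕ) :
      2 * (i + j + ℓ) - (i + ℓ + m) - 1 = i + ℓ + 2 * j - m - 1 := by omega
  have unshift (m : ℕ) : i + ℓ + m - ℓ = i + m := by omega
  rw [pdupAt_eq_pdupAt_add_iff_getElem? h, forall_lt_iff_of_le_of_le hj (Nat.le_add_right ℓ j)]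
  refine and_congr (forall₂_congr fun m hm => ?_)
    (and_congr (forall₃_congr fun m hm hm' => ?_) (forall₃_congr fun m hm hm' => ?_))
  · rw [getElem?_pdupAt_of_le_of_lt hi (by omega) (by omega), reflect_left,
      getElem?_pdupAt_of_lt h (by omega), eq_comm,
      getD_eq_getD_iff_getElem? d (by omega) (by omega)]
  · rw [getElem?_pdupAt_of_le_of_lt hi (by omega) (by omega), reflect_left,
      getElem?_pdupAt_of_le_of_lt h (by omega) (by omega), reflect_right, eq_comm,
      getD_eq_getD_iff_getElem? d (by omega) (by omega)]
  · rw [getElem?_pdupAt_of_le hi (by omega), unshift,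
      getElem?_pdupAt_of_le_of_lt h (by omega) (by omega), reflect_right, eq_comm,
      getD_eq_getD_iff_getElem? d (by omega) (by omega)]

end Comparison

/-- Conditions for two palindromic duplications at positions `i` and `i+j`, `1 ≤ j < ℓ`,
to yield the same word (indices are 1-based: `x_k` is `x.getD (k-1) 0`). -/
theorem stmt17 (q ℓ n : ℕ) (hq : 2 ≤ q) (hℓ : 1 ≤ ℓ) (x : List (ZMod q)) (hx : x.length = n)
    (i j : ℕ) (hj1 : 1 ≤ j) (hjℓ : j < ℓ) (hij : i + j + ℓ ≤ n) :
    pdupAt i ℓ x = pdupAt (i + j) ℓ x ↔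
      ((∀ m < j, x.getD (i + ℓ + m) 0 = x.getD (i + ℓ - m - 1) 0) ∧
       (∀ m, j ≤ m → m < ℓ →
          x.getD (i + ℓ + 2 * j - m - 1) 0 = x.getD (i + ℓ - m - 1) 0) ∧
       (∀ m, ℓ ≤ m → m < ℓ + j →
          x.getD (i + ℓ + 2 * j - m - 1) 0 = x.getD (i + m) 0)) := by
  exact stmt17_general 0 hjℓ.le (hx ▸ hij)
end DupPaper
end

section
/- Let q ≥ 2, ℓ ≥ 1, x ∈ Z_q^n (indexed x_1, …, x_n), and let i ≥ 0 and j ≥ ℓ satisfy i + j ≤ n − ℓ. Then π_{i,ℓ}(x) = π_{i+j,ℓ}(x) if and only if all of the following hold: x_{i+ℓ+1+m} = x_{i+ℓ−m} for all m ∈ {0, …, ℓ−1}; x_{i+ℓ+1+m} = x_{i+1+m} for all m ∈ {ℓ, …, j−1}; and x_{i+ℓ+2j−m} = x_{i+1+m} for all m ∈ {j, …, ℓ+j−1}. -/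
/-!
Write `x = u v t w` with `|u| = i`, `|v| = ℓ`, `|t| = j`, and let `v'` be the last `ℓ` letters of
`v t`. Then `π_{i,ℓ}(x) = u v v^R t w` and `π_{i+j,ℓ}(x) = u v t v'^R w`, so cancelling the common
ends turns the question into the word equation `v^R t = t v'^R`. If `ℓ ≤ j`, comparing letters in
this equation gives one family of conditions on each of the ranges `[0, ℓ)`, `[ℓ, j)` and
`[j, ℓ + j)`.
-/

namespace DupPaper

variable {α : Type*}

theorem pdupAt_eq_pdupAt_add_iff (i j ℓ : ℕ) (x : List α) :
    pdupAt i ℓ x = pdupAt (i + j) ℓ x ↔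
      ((x.drop i).take ℓ).reverse ++ (x.drop (i + ℓ)).take j =
        (x.drop (i + ℓ)).take j ++ ((x.drop (i + j)).take ℓ).reverse := by
  have drop_eq : x.drop (i + ℓ) = (x.drop (i + ℓ)).take j ++ x.drop (i + j + ℓ) := by
    rw [add_right_comm, ← List.drop_drop (i := j), List.take_append_drop]
  have take_eq : x.take (i + j + ℓ) = x.take (i + ℓ) ++ (x.drop (i + ℓ)).take j := by
    rw [add_right_comm, List.take_add]
  have left_eq : pdupAt i ℓ x = x.take (i + ℓ) ++
      (((x.drop i).take ℓ).reverse ++ (x.drop (i + ℓ)).take j) ++ x.drop (i + j + ℓ) := by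
    conv_lhs => rw [pdupAt, drop_eq]
    simp only [List.append_assoc]
  have right_eq : pdupAt (i + j) ℓ x = x.take (i + ℓ) ++
      ((x.drop (i + ℓ)).take j ++ ((x.drop (i + j)).take ℓ).reverse) ++ x.drop (i + j + ℓ) := by
    rw [pdupAt, take_eq]
    simp only [List.append_assoc]
  rw [left_eq, right_eq, List.append_left_inj, List.append_right_inj]

theorem eq_iff_forall_getD_eq {a b : List α} (d : α) (hab : a.length = b.length) :
    a = b ↔ ∀ m < a.length, a.getD m d = b.getD m d := by
  refine ⟨fun h m _ => by rw [h], fun h => List.ext_getElem hab fun m ha hb => ?_⟩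
  simpa only [List.getD_eq_getElem _ d ha, List.getD_eq_getElem _ d hb] using h m ha

theorem append_eq_append_iff_forall_getD_eq {a b t : List α} (d : α) (hab : a.length = b.length)
    (hat : a.length ≤ t.length) :
    a ++ t = t ++ b ↔
      (∀ m < a.length, t.getD m d = a.getD m d) ∧
      (∀ m, a.length ≤ m → m < t.length → t.getD m d = t.getD (m - a.length) d) ∧
      (∀ m, t.length ≤ m → m < a.length + t.length →
        b.getD (m - t.length) d = t.getD (m - a.length) d) := by
  rw [eq_iff_forall_getD_eq d (by simp only [List.length_append]; omega), List.length_append]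
  constructor
  · intro h
    refine ⟨fun m hm => ?_, fun m hm hm' => ?_, fun m hm hm' => ?_⟩
    · rw [← List.getD_append a t d m hm, h m (by omega), List.getD_append t b d m (by omega)]
    · rw [← List.getD_append_right a t d m hm, h m (by omega), List.getD_append t b d m hm']
    · rw [← List.getD_append_right t b d m hm, ← h m hm',
        List.getD_append_right a t d m (by omega)]
  · rintro ⟨prefix_eq, period_eq, suffix_eq⟩ m hm
    rcases lt_or_ge m a.length with hma | hma
    · rw [List.getD_append a t d m hma, List.getD_append t b d m (by omega), prefix_eq m hma]
    rw [List.getD_append_right a t d m hma]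
    rcases lt_or_ge m t.length with hmt | hmt
    · rw [List.getD_append t b d m hmt, period_eq m hma hmt]
    · rw [List.getD_append_right t b d m hmt, suffix_eq m hmt hm]

theorem length_take_drop {x : List α} {i k : ℕ} (hik : i + k ≤ x.length) :
    ((x.drop i).take k).length = k := by
  rw [List.length_take, List.length_drop]
  omega

theorem getD_take_drop (x : List α) (d : α) (i : ℕ) {k m : ℕ} (hm : m < k) :
    ((x.drop i).take k).getD m d = x.getD (i + m) d := by
  simp only [List.getD_eq_getElem?_getD, List.getElem?_take_of_lt hm, List.getElem?_drop]

theorem getD_reverse_take_drop {x : List α} (d : α) {i k m : ℕ} (hik : i + k ≤ x.length)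
    (hm : m < k) : ((x.drop i).take k).reverse.getD m d = x.getD (i + k - m - 1) d := by
  rw [List.getD_reverse m (by rwa [length_take_drop hik]), length_take_drop hik,
    getD_take_drop x d i (by omega)]
  congr 1
  omega

theorem stmt18_general {x : List α} (d : α) {i j ℓ : ℕ} (hjℓ : ℓ ≤ j)
    (hij : i + j + ℓ ≤ x.length) :
    pdupAt i ℓ x = pdupAt (i + j) ℓ x ↔
      ((∀ m < ℓ, x.getD (i + ℓ + m) d = x.getD (i + ℓ - m - 1) d) ∧
       (∀ m, ℓ ≤ m → m < j → x.getD (i + ℓ + m) d = x.getD (i + m) d) ∧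
       (∀ m, j ≤ m → m < ℓ + j →
          x.getD (i + ℓ + 2 * j - m - 1) d = x.getD (i + m) d)) := by
  have length_v : ((x.drop i).take ℓ).reverse.length = ℓ := by
    rw [List.length_reverse, length_take_drop (by omega)]
  have length_v' : ((x.drop (i + j)).take ℓ).reverse.length = ℓ := by
    rw [List.length_reverse, length_take_drop hij]
  have length_t : ((x.drop (i + ℓ)).take j).length = j := length_take_drop (by omega)
  rw [pdupAt_eq_pdupAt_add_iff, append_eq_append_iff_forall_getD_eq d (by omega) (by omega),
    length_v, length_t]
  refine and_congr ?_ (and_congr ?_ ?_)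
  · refine forall₂_congr fun m hm => ?_
    rw [getD_take_drop x d _ (by omega), getD_reverse_take_drop d (by omega) hm]
  · refine forall₃_congr fun m hm hm' => ?_
    rw [getD_take_drop x d _ hm', getD_take_drop x d _ (by omega),
      show i + ℓ + (m - ℓ) = i + m by omega]
  · refine forall₃_congr fun m hm hm' => ?_
    rw [getD_reverse_take_drop d hij (by omega), getD_take_drop x d _ (by omega),
      show i + j + ℓ - (m - j) - 1 = i + ℓ + 2 * j - m - 1 by omega,
      show i + ℓ + (m - ℓ) = i + m by omega]

/-- Conditions for two palindromic duplications at positions `i` and `i+j`, `j ≥ ℓ`,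
to yield the same word (indices are 1-based: `x_k` is `x.getD (k-1) 0`). -/
theorem stmt18 (q ℓ n : ℕ) (hq : 2 ≤ q) (hℓ : 1 ≤ ℓ) (x : List (ZMod q)) (hx : x.length = n)
    (i j : ℕ) (hjℓ : ℓ ≤ j) (hij : i + j + ℓ ≤ n) :
    pdupAt i ℓ x = pdupAt (i + j) ℓ x ↔
      ((∀ m < ℓ, x.getD (i + ℓ + m) 0 = x.getD (i + ℓ - m - 1) 0) ∧
       (∀ m, ℓ ≤ m → m < j → x.getD (i + ℓ + m) 0 = x.getD (i + m) 0) ∧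
       (∀ m, j ≤ m → m < ℓ + j →
          x.getD (i + ℓ + 2 * j - m - 1) 0 = x.getD (i + m) 0)) := by
  subst hx
  exact stmt18_general 0 hjℓ hij

end DupPaper
end
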